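/- arXiv:1404.3170 — 3 statements merged into one kernel-verified Lean document; each statement's English description precedes it below -/
import Mathlib

section
/- Let ε = exp(2πi/5) and let S = [[ε³,0],[0,ε²]] and V = [[0,−1],[1,0]] in SL(2,ℂ). There exists a finite subgroup G of SL(2,ℂ) of order 120 (the binary icosahedral group) containing both S and V such that every element A ∈ G leaves all three icosahedral forms invariant: F(A·(x,y)) = F(x,y), H(A·(x,y)) = H(x,y), and T(A·(x,y)) = T(x,y) for all A ∈ G. -/
open MvPolynomial

/-- Substitution of the linear map given by a 2×2 matrix `A` into a two-variable
polynomial: `G(A·(x,y)) = G(ax+by, cx+dy)`. -/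
noncomputable def subst (A : Matrix (Fin 2) (Fin 2) ℂ) (G : MvPolynomial (Fin 2) ℂ) :
    MvPolynomial (Fin 2) ℂ :=
  aeval (fun i => C (A i 0) * X 0 + C (A i 1) * X 1) G

/-- The fifth root of unity `ε = exp(2πi/5)`. -/
noncomputable def ε : ℂ := Complex.exp (2 * (Real.pi : ℂ) * Complex.I / 5)

/-- The diagonal icosahedral generator `S = [[ε³,0],[0,ε²]] ∈ SL(2,ℂ)`. -/
noncomputable def Smat : Matrix (Fin 2) (Fin 2) ℂ := !![ε ^ 3, 0; 0, ε ^ 2]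

/-- The quarter-turn generator `V = [[0,−1],[1,0]] ∈ SL(2,ℂ)`. -/
noncomputable def Vmat : Matrix (Fin 2) (Fin 2) ℂ := !![0, -1; 1, 0]

/-- Klein's degree-12 icosahedral form `F(x,y) = x·y·(x^10 − 11x^5y^5 − y^10)`. -/
noncomputable def F : MvPolynomial (Fin 2) ℂ :=
  X 0 * X 1 * ((X 0) ^ 10 - 11 * (X 0) ^ 5 * (X 1) ^ 5 - (X 1) ^ 10)

/-- Klein's degree-20 icosahedral form `H`. -/
noncomputable def H : MvPolynomial (Fin 2) ℂ :=
  (X 0) ^ 20 + 228 * (X 0) ^ 15 * (X 1) ^ 5 + 494 * (X 0) ^ 10 * (X 1) ^ 10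
    - 228 * (X 0) ^ 5 * (X 1) ^ 15 + (X 1) ^ 20

/-- Klein's degree-30 icosahedral form `T`. -/
noncomputable def T : MvPolynomial (Fin 2) ℂ :=
  (X 0) ^ 30 - 522 * (X 0) ^ 25 * (X 1) ^ 5 - 10005 * (X 0) ^ 20 * (X 1) ^ 10
    - 10005 * (X 0) ^ 10 * (X 1) ^ 20 + 522 * (X 0) ^ 5 * (X 1) ^ 25 + (X 1) ^ 30

namespace BinaryIcosahedral

section Substitution

theorem subst_one (P : MvPolynomial (Fin 2) ℂ) : subst 1 P = P := by
  have h : (fun i : Fin 2 => C ((1 : Matrix (Fin 2) (Fin 2) ℂ) i 0) * X 0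
      + C ((1 : Matrix (Fin 2) (Fin 2) ℂ) i 1) * X 1) = (X : Fin 2 → MvPolynomial (Fin 2) ℂ) := by
    funext i
    fin_cases i <;> simp [Matrix.one_apply]
  rw [subst, h, aeval_X_left_apply]

theorem subst_mul (A B : Matrix (Fin 2) (Fin 2) ℂ) (P : MvPolynomial (Fin 2) ℂ) :
    subst (A * B) P = subst B (subst A P) := by
  unfold subst
  rw [← AlgHom.comp_apply, comp_aeval]
  congr 2
  funext i
  simp only [Matrix.mul_apply, Fin.sum_univ_two, map_add, map_mul, aeval_X, algHom_C,
    algebraMap_eq]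
  ring

/-- The elements of `SL(2,ℂ)` that leave a two-variable polynomial invariant. -/
def invarianceSubgroup (P : MvPolynomial (Fin 2) ℂ) :
    Subgroup (Matrix.SpecialLinearGroup (Fin 2) ℂ) where
  carrier := {A | subst A P = P}
  one_mem' := subst_one P
  mul_mem' {A B} hA hB := by
    simp only [Set.mem_ofPred_eq] at *
    rw [Matrix.SpecialLinearGroup.coe_mul, subst_mul, hA, hB]
  inv_mem' {A} hA := by
    simp only [Set.mem_ofPred_eq] at *
    nth_rewrite 1 [← hA]
    rw [← subst_mul, ← Matrix.SpecialLinearGroup.coe_mul, mul_inv_cancel,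
      Matrix.SpecialLinearGroup.coe_one, subst_one]

theorem mem_invarianceSubgroup {P : MvPolynomial (Fin 2) ℂ}
    {A : Matrix.SpecialLinearGroup (Fin 2) ℂ} :
    A ∈ invarianceSubgroup P ↔ subst A P = P := Iff.rfl

theorem pderiv_subst (A : Matrix (Fin 2) (Fin 2) ℂ) (j : Fin 2) (P : MvPolynomial (Fin 2) ℂ) :
    pderiv j (subst A P) =
      C (A 0 j) * subst A (pderiv 0 P) + C (A 1 j) * subst A (pderiv 1 P) := by
  unfold subst
  induction P using MvPolynomial.induction_on with
  | C a => simp [algHom_C]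
  | add p q hp hq => simp only [map_add, hp, hq]; ring
  | mul_X p i hp =>
    simp only [map_mul, Derivation.leibniz, hp, smul_eq_mul, map_add, aeval_X]
    fin_cases i <;> fin_cases j <;>
      simp <;> ring

/-- The Hessian determinant of a two-variable polynomial. -/
noncomputable def hessian (P : MvPolynomial (Fin 2) ℂ) : MvPolynomial (Fin 2) ℂ :=
  pderiv 0 (pderiv 0 P) * pderiv 1 (pderiv 1 P) - pderiv 0 (pderiv 1 P) * pderiv 1 (pderiv 0 P)

/-- The Jacobian determinant of two two-variable polynomials. -/
noncomputable def jacobian (P Q : MvPolynomial (Fin 2) ℂ) : MvPolynomial (Fin 2) ℂ :=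
  pderiv 0 P * pderiv 1 Q - pderiv 1 P * pderiv 0 Q

theorem jacobian_subst (A : Matrix (Fin 2) (Fin 2) ℂ) (P Q : MvPolynomial (Fin 2) ℂ) :
    jacobian (subst A P) (subst A Q) = C A.det * subst A (jacobian P Q) := by
  simp only [jacobian, pderiv_subst, Matrix.det_fin_two]
  simp only [subst, map_sub, map_mul]
  ring

theorem hessian_subst (A : Matrix (Fin 2) (Fin 2) ℂ) (P : MvPolynomial (Fin 2) ℂ) :
    hessian (subst A P) = C (A.det ^ 2) * subst A (hessian P) := by
  simp only [hessian, pderiv_subst, Matrix.det_fin_two, map_add, Derivation.leibniz, pderiv_C,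
    smul_eq_mul]
  simp only [subst, map_sub, map_mul, map_pow]
  ring

theorem hessian_F : hessian F = C (-121) * H := by
  have h (n : ℕ) [n.AtLeastTwo] (i : Fin 2) :
      pderiv i (OfNat.ofNat n : MvPolynomial (Fin 2) ℂ) = 0 := by
    exact_mod_cast (pderiv i).map_natCast n
  simp only [hessian, F, H, Derivation.leibniz, Derivation.leibniz_pow, map_sub, map_add,
    pderiv_X_self, pderiv_X_of_ne, ne_eq, zero_ne_one, one_ne_zero, not_false_eq_true, h,
    smul_eq_mul, nsmul_eq_mul, map_neg, map_ofNat]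
  norm_num [h]
  ring

theorem jacobian_F_H : jacobian F H = C (-20) * T := by
  have h (n : ℕ) [n.AtLeastTwo] (i : Fin 2) :
      pderiv i (OfNat.ofNat n : MvPolynomial (Fin 2) ℂ) = 0 := by
    exact_mod_cast (pderiv i).map_natCast n
  simp only [jacobian, F, H, T, Derivation.leibniz, Derivation.leibniz_pow, map_sub, map_add,
    pderiv_X_self, pderiv_X_of_ne, ne_eq, zero_ne_one, one_ne_zero, not_false_eq_true, h,
    smul_eq_mul, nsmul_eq_mul, map_neg, map_ofNat]
  norm_num [h]
  ring

theorem subst_C_mul (A : Matrix (Fin 2) (Fin 2) ℂ) (c : ℂ) (P : MvPolynomial (Fin 2) ℂ) :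
    subst A (C c * P) = C c * subst A P := by
  simp [subst, algHom_C]

theorem subst_H_of_subst_F {A : Matrix (Fin 2) (Fin 2) ℂ} (hA : A.det = 1)
    (hF : subst A F = F) : subst A H = H := by
  have h := hessian_subst A F
  rw [hF, hA, one_pow, C_1, one_mul, hessian_F, subst_C_mul] at h
  exact (mul_left_cancel₀ (C_ne_zero.mpr (by norm_num)) h).symm

theorem subst_T_of_subst_F {A : Matrix (Fin 2) (Fin 2) ℂ} (hA : A.det = 1)
    (hF : subst A F = F) : subst A T = T := by
  have h := jacobian_subst A F H
  rw [hF, subst_H_of_subst_F hA hF, hA, C_1, one_mul, jacobian_F_H, subst_C_mul] at h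
  exact (mul_left_cancel₀ (C_ne_zero.mpr (by norm_num)) h).symm

end Substitution

section GroupTheory

theorem eight_dvd_card {G : Type*} [Group G] {u v : G} (hv : orderOf v = 4)
    (hu : u ∉ Subgroup.zpowers v) (huv : u * v * u⁻¹ = v⁻¹) (huu : u ^ 2 = v ^ 2) :
    8 ∣ Nat.card G := by
  set Q := Subgroup.zpowers v with hQ
  set N := Subgroup.normalizer (Q : Set G)
  have huN : u ∈ N := by
    rw [Subgroup.mem_normalizer_iff_map_conj_eq, hQ, MonoidHom.map_zpowers]
    simp [huv]
  have hle : Q ≤ N := Subgroup.le_normalizer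
  let ū : N ⧸ Q.subgroupOf N := QuotientGroup.mk ⟨u, huN⟩
  have h2 : orderOf ū = 2 := by
    refine orderOf_eq_prime ?_ ?_
    · rw [← QuotientGroup.mk_pow, QuotientGroup.eq_one_iff, Subgroup.mem_subgroupOf]
      simp only [SubmonoidClass.mk_pow, huu]
      exact pow_mem (Subgroup.mem_zpowers v) 2
    · rw [Ne, QuotientGroup.eq_one_iff, Subgroup.mem_subgroupOf]
      exact hu
  have hcard := Subgroup.card_eq_card_quotient_mul_card_subgroup (Q.subgroupOf N)
  rw [Nat.card_congr (Subgroup.subgroupOfEquivOfLe hle).toEquiv, hQ, Nat.card_zpowers, hv] at hcard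
  refine dvd_trans ?_ (Subgroup.card_subgroup_dvd_card N)
  rw [hcard, show 8 = 2 * 4 from rfl, ← h2]
  exact mul_dvd_mul_right (orderOf_dvd_natCard ū) 4

open scoped Pointwise

variable {Γ : Type*} [Group Γ] {s v u : Γ}

theorem exists_zpow_mul_zpow (hvs : v * s * v⁻¹ = s⁻¹) (j k : ℤ) :
    ∃ m : ℤ, v ^ k * s ^ j = s ^ m * v ^ k := by
  have hN : v ∈ Subgroup.normalizer (Subgroup.zpowers s : Set Γ) := by
    rw [Subgroup.mem_normalizer_iff_map_conj_eq, MonoidHom.map_zpowers]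
    simp [hvs]
  obtain ⟨m, hm⟩ := ((Subgroup.mem_normalizer_iff.mp (zpow_mem hN k)) (s ^ j)).mp ⟨j, rfl⟩
  exact ⟨m, by simp only at hm; rw [hm]; group⟩

theorem exists_zpow_mul_zpow' (hvs : v * s * v⁻¹ = s⁻¹) (j k : ℤ) :
    ∃ m : ℤ, s ^ j * v ^ k = v ^ k * s ^ m := by
  obtain ⟨m, hm⟩ := exists_zpow_mul_zpow hvs j (-k)
  have h : s ^ j = v ^ k * (s ^ m * v ^ (-k)) := by rw [← hm]; group
  exact ⟨m, by rw [h]; group⟩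

/-- The elements `sⁱvᵏ` and `sⁱvᵏusʲ` of a group. -/
def normalForms (s v u : Γ) : Set Γ :=
  {x | ∃ i k : ℤ, x = s ^ i * v ^ k} ∪ {x | ∃ i k j : ℤ, x = s ^ i * v ^ k * u * s ^ j}

theorem finite_normalForms_and_ncard_le (hs : orderOf s = 5) (hv : orderOf v = 4) :
    (normalForms s v u).Finite ∧ (normalForms s v u).ncard ≤ 120 := by
  have hsub : normalForms s v u ⊆
      (Subgroup.zpowers s : Set Γ) * (Subgroup.zpowers v : Set Γ) ∪
        (Subgroup.zpowers s : Set Γ) * (Subgroup.zpowers v : Set Γ) * {u} *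
          (Subgroup.zpowers s : Set Γ) := by
    rintro x (⟨i, k, rfl⟩ | ⟨i, k, j, rfl⟩)
    · exact .inl (Set.mul_mem_mul ⟨i, rfl⟩ ⟨k, rfl⟩)
    · exact .inr (Set.mul_mem_mul (Set.mul_mem_mul (Set.mul_mem_mul ⟨i, rfl⟩ ⟨k, rfl⟩) rfl)
        ⟨j, rfl⟩)
  have hP : (Subgroup.zpowers s : Set Γ).ncard = 5 := by
    rw [← hs, ← Nat.card_zpowers]; rfl
  have hQ : (Subgroup.zpowers v : Set Γ).ncard = 4 := by
    rw [← hv, ← Nat.card_zpowers]; rfl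
  have hPf := Set.finite_of_ncard_ne_zero (by rw [hP]; norm_num)
  have hQf := Set.finite_of_ncard_ne_zero (by rw [hQ]; norm_num)
  have hfin := (hPf.mul hQf).union (((hPf.mul hQf).mul (Set.finite_singleton u)).mul hPf)
  refine ⟨hfin.subset hsub, (Set.ncard_le_ncard hsub hfin).trans ?_⟩
  have h1 := Set.natCard_mul_le (s := (Subgroup.zpowers s : Set Γ))
    (t := (Subgroup.zpowers v : Set Γ))
  have h2 := Set.natCard_mul_le
    (s := (Subgroup.zpowers s : Set Γ) * (Subgroup.zpowers v : Set Γ)) (t := {u})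
  have h3 := Set.natCard_mul_le
    (s := (Subgroup.zpowers s : Set Γ) * (Subgroup.zpowers v : Set Γ) * {u})
    (t := (Subgroup.zpowers s : Set Γ))
  simp only [Nat.card_coe_set_eq, Set.ncard_singleton, hP, hQ] at h1 h2 h3
  refine (Set.ncard_union_le _ _).trans ?_
  omega

theorem zpow_s_mul_mem {x : Γ} (hx : x ∈ normalForms s v u) (n : ℤ) :
    s ^ n * x ∈ normalForms s v u := by
  obtain ⟨i, k, rfl⟩ | ⟨i, k, j, rfl⟩ := hx
  · exact .inl ⟨n + i, k, by group⟩
  · exact .inr ⟨n + i, k, j, by group⟩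

theorem mul_zpow_s_mem (hvs : v * s * v⁻¹ = s⁻¹) {x : Γ}
    (hx : x ∈ normalForms s v u) (n : ℤ) : x * s ^ n ∈ normalForms s v u := by
  obtain ⟨i, k, rfl⟩ | ⟨i, k, j, rfl⟩ := hx
  · obtain ⟨m, hm⟩ := exists_zpow_mul_zpow hvs n k
    exact .inl ⟨i + m, k, by rw [mul_assoc, hm]; group⟩
  · exact .inr ⟨i, k, j + n, by group⟩

theorem zpow_v_mul_mem (hvs : v * s * v⁻¹ = s⁻¹) {x : Γ}
    (hx : x ∈ normalForms s v u) (n : ℤ) : v ^ n * x ∈ normalForms s v u := by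
  obtain ⟨i, k, rfl⟩ | ⟨i, k, j, rfl⟩ := hx
  · obtain ⟨m, hm⟩ := exists_zpow_mul_zpow hvs i n
    exact .inl ⟨m, n + k, by rw [← mul_assoc, hm]; group⟩
  · obtain ⟨m, hm⟩ := exists_zpow_mul_zpow hvs i n
    exact .inr ⟨m, n + k, j, by simp only [← mul_assoc]; rw [hm]; group⟩

theorem u_mul_zpow_v (huv : u * v * u⁻¹ = v⁻¹) (n : ℤ) : u * v ^ n = v ^ (-n) * u := by
  rw [← mul_inv_eq_iff_eq_mul, ← conj_zpow, huv, inv_zpow']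

theorem mul_zpow_v_mem (hvs : v * s * v⁻¹ = s⁻¹) (huv : u * v * u⁻¹ = v⁻¹) {x : Γ}
    (hx : x ∈ normalForms s v u) (n : ℤ) : x * v ^ n ∈ normalForms s v u := by
  obtain ⟨i, k, rfl⟩ | ⟨i, k, j, rfl⟩ := hx
  · exact .inl ⟨i, k + n, by group⟩
  · obtain ⟨m, hm⟩ := exists_zpow_mul_zpow' hvs j n
    refine .inr ⟨i, k - n, m, ?_⟩
    calc s ^ i * v ^ k * u * s ^ j * v ^ n = s ^ i * v ^ k * (u * v ^ n) * s ^ m := by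
          simp only [mul_assoc, hm]
      _ = _ := by rw [u_mul_zpow_v huv]; group

/-- The defining relations of the binary icosahedral group in terms of Klein's generators. -/
structure IcosahedralRelations (s v u : Γ) : Prop where
  orderOf_s : orderOf s = 5
  orderOf_v : orderOf v = 4
  v_conj_s : v * s * v⁻¹ = s⁻¹
  u_conj_v : u * v * u⁻¹ = v⁻¹
  u_sq : u ^ 2 = v ^ 2
  u_s_u : u * s * u = s⁻¹ * u * s⁻¹
  u_s_sq_u : u * s ^ 2 * u = s ^ 2 * u * v * s ^ 2

namespace IcosahedralRelations


theorem v_sq_ne_one (h : IcosahedralRelations s v u) : v ^ 2 ≠ 1 := fun h1 => by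
  have := orderOf_dvd_of_pow_eq_one h1
  rw [h.orderOf_v] at this
  norm_num at this

theorem v_pow (h : IcosahedralRelations s v u) : v ^ 4 = 1 := h.orderOf_v ▸ pow_orderOf_eq_one v

theorem u_inv (h : IcosahedralRelations s v u) : u⁻¹ = v ^ (2 : ℤ) * u := by
  refine inv_eq_of_mul_eq_one_left ?_
  rw [mul_assoc, ← sq, h.u_sq, ← h.v_pow]
  group

theorem u_mul_mul_u (h : IcosahedralRelations s v u) (x : Γ) :
    u * x * u = v ^ (2 : ℤ) * (u * x⁻¹ * u)⁻¹ * v ^ (2 : ℤ) := by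
  have hz : v ^ (2 : ℤ) = u ^ (2 : ℤ) := by exact_mod_cast h.u_sq.symm
  rw [hz]
  group

theorem zpow_eq (h : IcosahedralRelations s v u) (n : ℤ) :
    s ^ n = 1 ∨ s ^ n = s ∨ s ^ n = s⁻¹ ∨ s ^ n = s ^ 2 ∨ s ^ n = (s ^ 2)⁻¹ := by
  have key (m : ℤ) (hm : n % 5 = m % 5) : s ^ n = s ^ m := by
    rw [← zpow_mod_orderOf, ← zpow_mod_orderOf s m, h.orderOf_s]
    exact congrArg _ hm
  have : n % 5 = 0 ∨ n % 5 = 1 ∨ n % 5 = 2 ∨ n % 5 = 3 ∨ n % 5 = 4 := by omega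
  obtain hn | hn | hn | hn | hn := this
  · exact .inl (by rw [key 0 hn, zpow_zero])
  · exact .inr (.inl (by rw [key 1 hn, zpow_one]))
  · exact .inr (.inr (.inr (.inl (by rw [key 2 hn]; norm_cast))))
  · exact .inr (.inr (.inr (.inr (by rw [key (-2) (by omega), zpow_neg]; norm_cast))))
  · exact .inr (.inr (.inl (by rw [key (-1) (by omega), zpow_neg_one])))

theorem one_mem : (1 : Γ) ∈ normalForms s v u := .inl ⟨0, 0, by simp⟩

theorem u_mem : u ∈ normalForms s v u := .inr ⟨0, 0, 0, by simp⟩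

theorem u_mul_zpow_s_mul_u_mem (h : IcosahedralRelations s v u) (n : ℤ) :
    u * s ^ n * u ∈ normalForms s v u := by
  obtain hn | hn | hn | hn | hn := h.zpow_eq n <;> rw [hn]
  · exact .inl ⟨0, 2, by rw [mul_one, ← sq, h.u_sq]; simp⟩
  · exact .inr ⟨-1, 0, -1, by rw [h.u_s_u]; group⟩
  · rw [h.u_mul_mul_u, inv_inv, h.u_s_u,
      show (s⁻¹ * u * s⁻¹)⁻¹ = s ^ (1 : ℤ) * u⁻¹ * s ^ (1 : ℤ) by group, h.u_inv]
    exact mul_zpow_v_mem h.v_conj_s h.u_conj_v (zpow_v_mul_mem h.v_conj_s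
      (mul_zpow_s_mem h.v_conj_s (zpow_s_mul_mem
        (zpow_v_mul_mem h.v_conj_s u_mem _) _) _) _) _
  · refine .inr ⟨2, -1, 2, ?_⟩
    have := u_mul_zpow_v h.u_conj_v 1
    rw [zpow_one] at this
    rw [h.u_s_sq_u, mul_assoc (s ^ 2), this]
    group
  · rw [h.u_mul_mul_u, inv_inv, h.u_s_sq_u, show (s ^ 2 * u * v * s ^ 2)⁻¹ =
      s ^ (-2 : ℤ) * (v ^ (-1 : ℤ) * u⁻¹) * s ^ (-2 : ℤ) by group, h.u_inv]
    exact mul_zpow_v_mem h.v_conj_s h.u_conj_v (zpow_v_mul_mem h.v_conj_s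
      (mul_zpow_s_mem h.v_conj_s (zpow_s_mul_mem
        (zpow_v_mul_mem h.v_conj_s
          (zpow_v_mul_mem h.v_conj_s u_mem _) _) _) _) _) _

theorem u_mul_mem (h : IcosahedralRelations s v u) {x : Γ} (hx : x ∈ normalForms s v u) :
    u * x ∈ normalForms s v u := by
  obtain ⟨i, k, rfl⟩ | ⟨i, k, j, rfl⟩ := hx
  · rw [← mul_assoc]
    exact mul_zpow_v_mem h.v_conj_s h.u_conj_v
      (mul_zpow_s_mem h.v_conj_s u_mem i) k
  · have hk : v ^ k * u = u * v ^ (-k) := by rw [u_mul_zpow_v h.u_conj_v, neg_neg]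
    have : u * (s ^ i * v ^ k * u * s ^ j) = u * s ^ i * u * v ^ (-k) * s ^ j := by
      simp only [mul_assoc, ← hk]
    rw [this]
    exact mul_zpow_s_mem h.v_conj_s (mul_zpow_v_mem h.v_conj_s h.u_conj_v
      (h.u_mul_zpow_s_mul_u_mem i) _) _

theorem closure_subset (h : IcosahedralRelations s v u) :
    (Subgroup.closure {s, v, u} : Set Γ) ⊆ normalForms s v u := by
  intro x hx
  induction hx using Subgroup.closure_induction_left with
  | one => exact one_mem
  | mul_left x hx y _ hy =>
    obtain rfl | rfl | rfl := hx
    · simpa using zpow_s_mul_mem hy 1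
    · simpa using zpow_v_mul_mem h.v_conj_s hy 1
    · exact h.u_mul_mem hy
  | inv_mul_cancel x hx y _ hy =>
    obtain rfl | rfl | rfl := hx
    · simpa using zpow_s_mul_mem hy (-1)
    · simpa using zpow_v_mul_mem h.v_conj_s hy (-1)
    · rw [h.u_inv, mul_assoc]
      exact zpow_v_mul_mem h.v_conj_s (h.u_mul_mem hy) 2

theorem u_notMem_zpowers (h : IcosahedralRelations s v u) : u ∉ Subgroup.zpowers v := by
  rintro ⟨k, rfl⟩
  have := h.u_conj_v
  simp only [← (Commute.refl v).zpow_right k |>.eq, mul_inv_cancel_right] at this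
  exact h.v_sq_ne_one (by rw [sq]; nth_rewrite 1 [this]; simp)

theorem three_dvd_orderOf (h : IcosahedralRelations s v u) : 3 ∣ orderOf (s * u) := by
  have h3 : (s * u) ^ 3 = v ^ 2 := by
    have := h.u_s_u
    calc (s * u) ^ 3 = s * (u * s * u) * s * u := by
          simp only [pow_succ, pow_zero, one_mul, mul_assoc]
      _ = u ^ 2 := by rw [this, sq]; group
      _ = v ^ 2 := h.u_sq
  by_contra hd
  have h6 : orderOf (s * u) ∣ 3 * 2 := orderOf_dvd_of_pow_eq_one (by
    rw [pow_mul, h3, ← pow_mul, h.v_pow])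
  have h2 : (s * u) ^ 2 = 1 := orderOf_dvd_iff_pow_eq_one.mp <|
    (((Nat.Prime.coprime_iff_not_dvd Nat.prime_three).mpr hd).symm).dvd_of_dvd_mul_left h6
  have hsu : s = u := by
    rw [pow_succ, h2, one_mul, ← h.u_sq, sq] at h3
    exact mul_right_cancel h3
  have h4 : orderOf s ∣ 4 := orderOf_dvd_of_pow_eq_one (by
    rw [hsu, show 4 = 2 * 2 from rfl, pow_mul, h.u_sq, ← pow_mul, h.v_pow])
  rw [h.orderOf_s] at h4
  norm_num at h4

theorem card_closure (h : IcosahedralRelations s v u) :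
    Nat.card (Subgroup.closure {s, v, u}) = 120 := by
  set G := Subgroup.closure {s, v, u}
  obtain ⟨hfin, hle⟩ := finite_normalForms_and_ncard_le (u := u) h.orderOf_s h.orderOf_v
  have hGfin : (G : Set Γ).Finite := hfin.subset h.closure_subset
  have : Finite G := hGfin
  have hle' : Nat.card G ≤ 120 := (Set.ncard_le_ncard h.closure_subset hfin).trans hle
  have hs : s ∈ G := Subgroup.subset_closure (by simp)
  have hv : v ∈ G := Subgroup.subset_closure (by simp)
  have hu : u ∈ G := Subgroup.subset_closure (by simp)
  have h5 : 5 ∣ Nat.card G := by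
    rw [← h.orderOf_s, ← Subgroup.orderOf_mk s hs]
    exact orderOf_dvd_natCard _
  have h3 : 3 ∣ Nat.card G := by
    refine h.three_dvd_orderOf.trans ?_
    rw [← Subgroup.orderOf_mk (s * u) (mul_mem hs hu)]
    exact orderOf_dvd_natCard _
  have h8 : 8 ∣ Nat.card G := by
    refine eight_dvd_card (u := ⟨u, hu⟩) (v := ⟨v, hv⟩) ?_ ?_ ?_ ?_
    · rw [Subgroup.orderOf_mk, h.orderOf_v]
    · rintro ⟨k, hk⟩
      exact h.u_notMem_zpowers ⟨k, congrArg Subtype.val hk⟩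
    · exact Subtype.ext h.u_conj_v
    · exact Subtype.ext h.u_sq
  have := Nat.card_pos (α := G)
  omega

end IcosahedralRelations

end GroupTheory
section KleinGenerators

theorem isPrimitiveRoot_ε : IsPrimitiveRoot ε 5 := by
  simpa [ε] using Complex.isPrimitiveRoot_exp 5 (by norm_num)

theorem ε_relation : ε ^ 4 + ε ^ 3 + ε ^ 2 + ε + 1 = 0 := by
  have h := isPrimitiveRoot_ε.geom_sum_eq_zero (by norm_num)
  simp only [Finset.sum_range_succ, Finset.sum_range_zero] at h
  linear_combination h

/-- The upper left entry of the third icosahedral generator, equal to `(ε - ε⁴)/√5`. -/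
noncomputable def uDiag : ℂ := (ε + 2 * ε ^ 2 - 2 * ε ^ 3 - ε ^ 4) / 5

/-- The off-diagonal entry of the third icosahedral generator, equal to `(ε² - ε³)/√5`. -/
noncomputable def uOffDiag : ℂ := (2 * ε - ε ^ 2 + ε ^ 3 - 2 * ε ^ 4) / 5

/-- The generator `S` as an element of `SL(2,ℂ)`. -/
noncomputable def S : Matrix.SpecialLinearGroup (Fin 2) ℂ :=
  ⟨Smat, by
    rw [Smat, Matrix.det_fin_two_of]
    linear_combination isPrimitiveRoot_ε.pow_eq_one⟩

/-- The generator `V` as an element of `SL(2,ℂ)`. -/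
noncomputable def V : Matrix.SpecialLinearGroup (Fin 2) ℂ :=
  ⟨Vmat, by simp [Vmat, Matrix.det_fin_two_of]⟩

/-- Klein's third icosahedral generator. -/
noncomputable def U : Matrix.SpecialLinearGroup (Fin 2) ℂ :=
  ⟨!![uDiag, uOffDiag; uOffDiag, -uDiag], by
    have h := ε_relation
    rw [Matrix.det_fin_two_of, uDiag, uOffDiag]
    grind⟩

theorem coe_S : (S : Matrix (Fin 2) (Fin 2) ℂ) = !![ε ^ 3, 0; 0, ε ^ 2] := rfl

theorem coe_V : (V : Matrix (Fin 2) (Fin 2) ℂ) = !![0, -1; 1, 0] := rfl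

theorem coe_U : (U : Matrix (Fin 2) (Fin 2) ℂ) = !![uDiag, uOffDiag; uOffDiag, -uDiag] := rfl

theorem coe_S_inv : ((S⁻¹ : Matrix.SpecialLinearGroup (Fin 2) ℂ) : Matrix (Fin 2) (Fin 2) ℂ) =
    !![ε ^ 2, 0; 0, ε ^ 3] := by
  rw [Matrix.SpecialLinearGroup.coe_inv, coe_S, Matrix.adjugate_fin_two_of]
  simp

theorem coe_V_sq : ((V ^ 2 : Matrix.SpecialLinearGroup (Fin 2) ℂ) : Matrix (Fin 2) (Fin 2) ℂ) =
    !![-1, 0; 0, -1] := by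
  rw [sq, Matrix.SpecialLinearGroup.coe_mul, coe_V]
  simp

theorem S_pow : S ^ 5 = 1 := by
  have h := isPrimitiveRoot_ε.pow_eq_one
  refine Subtype.ext ?_
  rw [Matrix.SpecialLinearGroup.coe_pow, coe_S, Matrix.SpecialLinearGroup.coe_one,
    Matrix.one_fin_two]
  simp only [pow_succ, pow_zero, one_mul, Matrix.mul_fin_two]
  congr! 3 <;> grind

theorem icosahedralRelations : IcosahedralRelations S V U where
  orderOf_s := by
    have : Fact (Nat.Prime 5) := ⟨Nat.prime_five⟩
    refine orderOf_eq_prime S_pow fun h => ?_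
    have := congrArg (fun A : Matrix.SpecialLinearGroup (Fin 2) ℂ => (A : Matrix (Fin 2) (Fin 2) ℂ) 1 1) h
    simp only [coe_S, Matrix.SpecialLinearGroup.coe_one] at this
    exact isPrimitiveRoot_ε.pow_ne_one_of_pos_of_lt (by norm_num) (by norm_num : 2 < 5)
      (by simpa using this)
  orderOf_v := by
    refine orderOf_eq_prime_pow (p := 2) (n := 1) (fun h => ?_) ?_
    · have := congrArg (fun A : Matrix.SpecialLinearGroup (Fin 2) ℂ => (A : Matrix (Fin 2) (Fin 2) ℂ) 1 1) h
      simp only [pow_one, coe_V_sq, Matrix.SpecialLinearGroup.coe_one] at this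
      norm_num at this
    · refine Subtype.ext ?_
      rw [show 2 ^ (1 + 1) = 2 * 2 from rfl, pow_mul, Matrix.SpecialLinearGroup.coe_pow, coe_V_sq,
        Matrix.SpecialLinearGroup.coe_one, Matrix.one_fin_two]
      simp [sq]
  v_conj_s := by
    rw [mul_inv_eq_iff_eq_mul]
    refine Subtype.ext ?_
    simp only [Matrix.SpecialLinearGroup.coe_mul, coe_S_inv, coe_S, coe_V]
    simp
  u_conj_v := by
    rw [mul_inv_eq_iff_eq_mul, eq_inv_mul_iff_mul_eq]
    refine Subtype.ext ?_
    simp only [Matrix.SpecialLinearGroup.coe_mul, coe_U, coe_V]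
    simp
  u_sq := by
    have h := ε_relation
    refine Subtype.ext ?_
    rw [coe_V_sq, sq, Matrix.SpecialLinearGroup.coe_mul, coe_U, Matrix.mul_fin_two, uDiag,
      uOffDiag]
    congr! 3 <;> grind
  u_s_u := by
    have h := ε_relation
    refine Subtype.ext ?_
    simp only [Matrix.SpecialLinearGroup.coe_mul, coe_S_inv, coe_S, coe_U, Matrix.mul_fin_two,
      uDiag, uOffDiag]
    congr! 3 <;> grind
  u_s_sq_u := by
    have h := ε_relation
    refine Subtype.ext ?_
    simp only [sq S, Matrix.SpecialLinearGroup.coe_mul, coe_S, coe_U, coe_V, Matrix.mul_fin_two,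
      uDiag, uOffDiag]
    congr! 3 <;> grind

theorem subst_eq_F_iff (A : Matrix (Fin 2) (Fin 2) ℂ) :
    subst A F = F ↔ ∀ x y : ℂ,
      (A 0 0 * x + A 0 1 * y) * (A 1 0 * x + A 1 1 * y) * ((A 0 0 * x + A 0 1 * y) ^ 10 -
        11 * (A 0 0 * x + A 0 1 * y) ^ 5 * (A 1 0 * x + A 1 1 * y) ^ 5 -
          (A 1 0 * x + A 1 1 * y) ^ 10) =
      x * y * (x ^ 10 - 11 * x ^ 5 * y ^ 5 - y ^ 10) := by
  have h (z : Fin 2 → ℂ) : eval z (subst A F) =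
      (A 0 0 * z 0 + A 0 1 * z 1) * (A 1 0 * z 0 + A 1 1 * z 1) *
        ((A 0 0 * z 0 + A 0 1 * z 1) ^ 10 -
        11 * (A 0 0 * z 0 + A 0 1 * z 1) ^ 5 * (A 1 0 * z 0 + A 1 1 * z 1) ^ 5 -
          (A 1 0 * z 0 + A 1 1 * z 1) ^ 10) := by
    have h11 : (11 : MvPolynomial (Fin 2) ℂ) = C 11 := (map_ofNat C 11).symm
    rw [subst, F, h11]
    simp [algHom_C]
  have h' (z : Fin 2 → ℂ) : eval z F =
      z 0 * z 1 * (z 0 ^ 10 - 11 * z 0 ^ 5 * z 1 ^ 5 - z 1 ^ 10) := by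
    simp [F]
  constructor
  · intro hA x y
    simpa [h, h'] using congrArg (eval ![x, y]) hA
  · intro hA
    refine MvPolynomial.funext fun z => ?_
    rw [h, h', hA]

theorem subst_S_F : subst S F = F := by
  rw [subst_eq_F_iff]
  intro x y
  have h := isPrimitiveRoot_ε.pow_eq_one
  simp only [coe_S, Matrix.of_apply, Matrix.cons_val', Matrix.cons_val_zero, Matrix.cons_val_one,
    Matrix.cons_val_fin_one, zero_mul, add_zero, zero_add]
  have h3 : (ε ^ 3 * x) ^ 5 = x ^ 5 := by linear_combination x ^ 5 * (ε ^ 10 + ε ^ 5 + 1) * h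
  have h2 : (ε ^ 2 * y) ^ 5 = y ^ 5 := by linear_combination y ^ 5 * (ε ^ 5 + 1) * h
  rw [show (ε ^ 3 * x) ^ 10 = ((ε ^ 3 * x) ^ 5) ^ 2 by ring,
    show (ε ^ 2 * y) ^ 10 = ((ε ^ 2 * y) ^ 5) ^ 2 by ring, h2, h3]
  linear_combination x * y * ((x ^ 5) ^ 2 - 11 * x ^ 5 * y ^ 5 - (y ^ 5) ^ 2) * h

theorem subst_V_F : subst V F = F := by
  rw [subst_eq_F_iff]
  intro x y
  simp only [coe_V, Matrix.of_apply, Matrix.cons_val', Matrix.cons_val_zero, Matrix.cons_val_one,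
    Matrix.cons_val_fin_one]
  ring

theorem subst_U_F : subst U F = F := by
  rw [subst_eq_F_iff]
  intro x y
  have h := ε_relation
  obtain ⟨g, hg, hb, ha⟩ : ∃ g : ℂ, g ^ 2 = 1 - g ∧ uOffDiag = g * uDiag ∧
      uDiag ^ 2 = -(3 + g) / 5 := by
    refine ⟨ε + ε ^ 4, by grind, ?_, ?_⟩ <;> rw [uDiag] <;> (try rw [uOffDiag]) <;> grind
  have ha12 : uDiag ^ 12 = (-(3 + g) / 5) ^ 6 := by rw [← ha]; ring
  have hscale : (uDiag * x + g * uDiag * y) * (g * uDiag * x + -uDiag * y) *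
        ((uDiag * x + g * uDiag * y) ^ 10 -
          11 * (uDiag * x + g * uDiag * y) ^ 5 * (g * uDiag * x + -uDiag * y) ^ 5 -
          (g * uDiag * x + -uDiag * y) ^ 10) =
      uDiag ^ 12 * ((x + g * y) * (g * x - y) * ((x + g * y) ^ 10 -
        11 * (x + g * y) ^ 5 * (g * x - y) ^ 5 - (g * x - y) ^ 10)) := by ring
  simp only [coe_U, Matrix.of_apply, Matrix.cons_val', Matrix.cons_val_zero, Matrix.cons_val_one,
    Matrix.cons_val_fin_one, hb]
  rw [hscale, ha12]
  have h3 : g ^ 3 = 2 * g - 1 := by linear_combination (g - 1) * hg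
  have h4 : g ^ 4 = 2 - 3 * g := by linear_combination g * h3 + 2 * hg
  have h5 : g ^ 5 = 5 * g - 3 := by linear_combination g * h4 - 3 * hg
  have h6 : (-(3 + g) / 5) ^ 6 = (13 + 8 * g) / 125 := by
    have : (-(3 + g) / 5) ^ 2 = (2 + g) / 5 := by linear_combination hg / 25
    rw [show (-(3 + g) / 5) ^ 6 = ((-(3 + g) / 5) ^ 2) ^ 3 by ring, this]
    linear_combination (h3 + 6 * hg) / 125
  have hp : (x + g * y) ^ 5 = x ^ 5 + 5 * g * x ^ 4 * y + 10 * (1 - g) * x ^ 3 * y ^ 2 +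
      10 * (2 * g - 1) * x ^ 2 * y ^ 3 + 5 * (2 - 3 * g) * x * y ^ 4 + (5 * g - 3) * y ^ 5 := by
    rw [← hg, ← h3, ← h4, ← h5]
    ring
  have hq : (g * x - y) ^ 5 = (5 * g - 3) * x ^ 5 - 5 * (2 - 3 * g) * x ^ 4 * y +
      10 * (2 * g - 1) * x ^ 3 * y ^ 2 - 10 * (1 - g) * x ^ 2 * y ^ 3 + 5 * g * x * y ^ 4 -
      y ^ 5 := by
    rw [← hg, ← h3, ← h4, ← h5]
    ring
  have hpq : (13 + 8 * g) * ((x + g * y) * (g * x - y)) =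
      (8 + 5 * g) * (x ^ 2 - x * y - y ^ 2) := by
    linear_combination (13 * x * y + 8 * x ^ 2 + 8 * g * x * y - 8 * x * y - 8 * y ^ 2) * hg
  rw [h6, show (x + g * y) ^ 10 = ((x + g * y) ^ 5) ^ 2 by ring,
    show (g * x - y) ^ 10 = ((g * x - y) ^ 5) ^ 2 by ring, hp, hq, div_mul_eq_mul_div,
    ← mul_assoc (13 + 8 * g), hpq, div_eq_iff (by norm_num)]
  ring_nf
  simp only [hg, h3]
  ring

end KleinGenerators

end BinaryIcosahedral

/-- There is an order-120 subgroup of `SL(2,ℂ)` (the binary icosahedral group)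
containing `S` and `V` under which all three icosahedral forms `F`, `H`, `T`
are invariant. -/
theorem binary_icosahedral_group_exists :
    ∃ G : Subgroup (Matrix.SpecialLinearGroup (Fin 2) ℂ),
      Nat.card G = 120 ∧
      (∃ S' ∈ G, ((S' : Matrix.SpecialLinearGroup (Fin 2) ℂ) : Matrix (Fin 2) (Fin 2) ℂ)
          = Smat) ∧
      (∃ V' ∈ G, ((V' : Matrix.SpecialLinearGroup (Fin 2) ℂ) : Matrix (Fin 2) (Fin 2) ℂ)
          = Vmat) ∧
      ∀ A ∈ G, subst ((A : Matrix.SpecialLinearGroup (Fin 2) ℂ) : Matrix (Fin 2) (Fin 2) ℂ) F = F ∧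
        subst ((A : Matrix.SpecialLinearGroup (Fin 2) ℂ) : Matrix (Fin 2) (Fin 2) ℂ) H = H ∧
        subst ((A : Matrix.SpecialLinearGroup (Fin 2) ℂ) : Matrix (Fin 2) (Fin 2) ℂ) T = T := by
  have key : ∀ A ∈ Subgroup.closure {BinaryIcosahedral.S, BinaryIcosahedral.V, BinaryIcosahedral.U},
      subst A F = F := fun A hA => by
    rw [← BinaryIcosahedral.mem_invarianceSubgroup]
    refine (Subgroup.closure_le _).mpr ?_ hA
    rintro x (rfl | rfl | rfl)
    exacts [BinaryIcosahedral.subst_S_F, BinaryIcosahedral.subst_V_F, BinaryIcosahedral.subst_U_F]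
  exact ⟨Subgroup.closure {BinaryIcosahedral.S, BinaryIcosahedral.V, BinaryIcosahedral.U},
    BinaryIcosahedral.icosahedralRelations.card_closure,
    ⟨BinaryIcosahedral.S, Subgroup.subset_closure (by simp), rfl⟩,
    ⟨BinaryIcosahedral.V, Subgroup.subset_closure (by simp), rfl⟩,
    fun A hA => ⟨key A hA, BinaryIcosahedral.subst_H_of_subst_F A.det_coe (key A hA),
      BinaryIcosahedral.subst_T_of_subst_F A.det_coe (key A hA)⟩⟩
end

section
/- There exists a finite subgroup G of SL(2,ℂ) of order 120 under which the form F(x,y) = x·y·(x^10 − 11x^5y^5 − y^10) is invariant (i.e., F(A·(x,y)) = F(x,y) for all A ∈ G), whose center is {I, −I} of order 2, and whose quotient by its center is isomorphic as a group to the alternating group A₅ on five letters (the rotation group of the icosahedron, of order 60). -/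
open MvPolynomial

/-- The octahedral sextic attached to a fifth root of unity `z`. -/
def octForm {R : Type*} [CommRing R] (z x y : R) : R :=
  z ^ 3 * x ^ 6 - 2 * z ^ 2 * x ^ 5 * y - 5 * z * x ^ 4 * y ^ 2 - 5 * z ^ 4 * x ^ 2 * y ^ 4 +
    2 * z ^ 3 * x * y ^ 5 + z ^ 2 * y ^ 6

section CommRing

variable {R S : Type*} [CommRing R] [CommRing S]

theorem map_octForm (f : R →+* S) (z x y : R) :
    f (octForm z x y) = octForm (f z) (f x) (f y) := by
  simp [octForm, map_ofNat f]

theorem octForm_eq_cubic {z x y u v w : R} (hu : 5 * x ^ 2 = u) (hv : 5 * (x * y) = v)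
    (hw : 5 * y ^ 2 = w) :
    125 * octForm z x y = z ^ 3 * u ^ 3 - 2 * z ^ 2 * u ^ 2 * v - 5 * z * u ^ 2 * w -
      5 * z ^ 4 * u * w ^ 2 + 2 * z ^ 3 * v * w ^ 2 + z ^ 2 * w ^ 3 := by
  subst hu hv hw
  simp only [octForm]
  ring

/-- The involution `(x, y) ↦ (ax + by, bx - ay)` permutes the five octahedral sextics. -/
theorem octForm_involution {e a b : R} (x y : R) (he : e ^ 4 = -1 - e - e ^ 2 - e ^ 3)
    (ha : 5 * a ^ 2 = e ^ 2 + e ^ 3 - 2) (hb : 5 * b ^ 2 = -3 - e ^ 2 - e ^ 3)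
    (hab : 5 * (a * b) = 2 * e ^ 3 + 2 * e ^ 2 + 1) (k : Fin 5) :
    125 * octForm (e ^ ((![0, 2, 1, 4, 3] : Fin 5 → Fin 5) k : ℕ))
        (a * x + b * y) (b * x - a * y) =
      125 * octForm (e ^ (k : ℕ)) x y := by
  have hu : 5 * (a * x + b * y) ^ 2 = (e ^ 2 + e ^ 3 - 2) * x ^ 2 +
      2 * (2 * e ^ 3 + 2 * e ^ 2 + 1) * (x * y) + (-3 - e ^ 2 - e ^ 3) * y ^ 2 := by
    linear_combination x ^ 2 * ha + y ^ 2 * hb + 2 * x * y * hab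
  have hw : 5 * (b * x - a * y) ^ 2 = (e ^ 2 + e ^ 3 - 2) * y ^ 2 -
      2 * (2 * e ^ 3 + 2 * e ^ 2 + 1) * (x * y) + (-3 - e ^ 2 - e ^ 3) * x ^ 2 := by
    linear_combination y ^ 2 * ha + x ^ 2 * hb - 2 * x * y * hab
  have hv : 5 * ((a * x + b * y) * (b * x - a * y)) =
      (2 * e ^ 3 + 2 * e ^ 2 + 1) * (x ^ 2 - y ^ 2) + (-1 - 2 * e ^ 2 - 2 * e ^ 3) * (x * y) := by
    linear_combination (x ^ 2 - y ^ 2) * hab + x * y * hb - x * y * ha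
  rw [octForm_eq_cubic hu hv hw]
  clear ha hb hab hu hv hw
  fin_cases k <;> simp [octForm] <;> grind

theorem octForm_rotation {e : R} (he : e ^ 5 = 1) (z x y : R) :
    octForm z (e ^ 3 * x) (e ^ 2 * y) = octForm (z * e) x y := by
  simp only [octForm]
  grind

theorem sum_octForm_sq {e : R} (he : e ^ 4 = -1 - e - e ^ 2 - e ^ 3) (x y : R) :
    ∑ k : Fin 5, octForm (e ^ (k : ℕ)) x y ^ 2 =
      -20 * (x * y * (x ^ 10 - 11 * x ^ 5 * y ^ 5 - y ^ 10)) := by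
  simp only [octForm, Fin.sum_univ_five]
  simp
  grind

theorem sum_pow_mul_octForm {e : R} (he : e ^ 4 = -1 - e - e ^ 2 - e ^ 3) (x y : R) :
    ∑ k : Fin 5, (e ^ (k : ℕ)) ^ 4 * octForm (e ^ (k : ℕ)) x y = -25 * (x ^ 4 * y ^ 2) := by
  simp only [octForm, Fin.sum_univ_five]
  simp
  grind

end CommRing

theorem eq_one_or_neg_one_of_map_monomial {K : Type*} [Field K] [CharZero K] {a b c d : K}
    (hdet : a * d - b * c = 1)
    (h : ∀ x y : K, (a * x + b * y) ^ 4 * (c * x + d * y) ^ 2 = x ^ 4 * y ^ 2) :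
    b = 0 ∧ c = 0 ∧ (a = 1 ∧ d = 1 ∨ a = -1 ∧ d = -1) := by
  have h₁ : a = 0 ∨ c = 0 := by simpa using h 1 0
  have h₂ : b = 0 ∨ d = 0 := by simpa using h 0 1
  have h₃ := h 1 1
  have h₄ := h 2 1
  rcases h₁ with rfl | rfl
  · have hd : d = 0 := by
      rcases h₂ with rfl | hd
      · simp at hdet
      · exact hd
    subst hd
    exfalso
    grind
  · have hb : b = 0 := by
      rcases h₂ with hb | rfl
      · exact hb
      · simp at hdet
    subst hb
    have ha : (a - 1) * (a + 1) = 0 := by grind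
    refine ⟨rfl, rfl, ?_⟩
    rcases mul_eq_zero.1 ha with ha | ha <;> grind

section Subst

variable (A B : Matrix (Fin 2) (Fin 2) ℂ) (p : MvPolynomial (Fin 2) ℂ)

theorem subst_one : subst 1 p = p := by
  have : (fun i : Fin 2 => C ((1 : Matrix (Fin 2) (Fin 2) ℂ) i 0) * X 0 +
      C ((1 : Matrix (Fin 2) (Fin 2) ℂ) i 1) * X 1) = (X : Fin 2 → MvPolynomial (Fin 2) ℂ) := by
    funext i
    fin_cases i <;> simp [Matrix.one_apply]
  rw [subst, this, aeval_X_left_apply]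

theorem eval_subst (v : Fin 2 → ℂ) : eval v (subst A p) = eval (A.mulVec v) p := by
  rw [subst, ← coe_aeval_eq_eval, ← coe_aeval_eq_eval, RingHom.coe_coe, RingHom.coe_coe,
    comp_aeval_apply]
  congr 2
  funext i
  simp [Matrix.mulVec, dotProduct, Fin.sum_univ_two]

theorem subst_mul : subst (A * B) p = subst B (subst A p) :=
  MvPolynomial.funext fun v => by simp only [eval_subst, Matrix.mulVec_mulVec]

end Subst

/-- A primitive fifth root of unity. -/
noncomputable def zetaFive : ℂ := Complex.exp (2 * Real.pi * Complex.I / 5)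

theorem isPrimitiveRoot_zetaFive : IsPrimitiveRoot zetaFive 5 := by
  simpa [zetaFive] using Complex.isPrimitiveRoot_exp 5 (by norm_num)

theorem zetaFive_pow_five : zetaFive ^ 5 = 1 := isPrimitiveRoot_zetaFive.pow_eq_one

theorem zetaFive_pow_four : zetaFive ^ 4 = -1 - zetaFive - zetaFive ^ 2 - zetaFive ^ 3 := by
  have h := isPrimitiveRoot_zetaFive.geom_sum_eq_zero (by norm_num)
  simp only [Finset.sum_range_succ, Finset.sum_range_zero] at h
  linear_combination h

/-- The five octahedral sextics permuted by the binary icosahedral group. -/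
noncomputable def octPoly (k : Fin 5) : MvPolynomial (Fin 2) ℂ :=
  octForm (C (zetaFive ^ (k : ℕ))) (X 0) (X 1)

theorem eval_octPoly (k : Fin 5) (v : Fin 2 → ℂ) :
    eval v (octPoly k) = octForm (zetaFive ^ (k : ℕ)) (v 0) (v 1) := by
  simp [octPoly, map_octForm]

theorem octPoly_injective : Function.Injective octPoly := by
  intro j k h
  have h₁ := congrArg (eval ![1, 0]) h
  simp only [eval_octPoly] at h₁
  simp [octForm] at h₁
  have h₂ : ∀ n : ℕ, ((zetaFive ^ n) ^ 3) ^ 2 = zetaFive ^ n := fun n => by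
    rw [← pow_mul, ← pow_mul, mul_comm n, mul_comm _ 2, pow_mul,
      show zetaFive ^ (2 * 3) = zetaFive by
        rw [show 2 * 3 = 5 + 1 by rfl, pow_succ, zetaFive_pow_five, one_mul]]
  have h₃ : zetaFive ^ (j : ℕ) = zetaFive ^ (k : ℕ) := by rw [← h₂ j, h₁, h₂]
  exact Fin.ext (isPrimitiveRoot_zetaFive.pow_inj j.2 k.2 h₃)

theorem sum_octPoly_sq : ∑ k, octPoly k ^ 2 = -20 * F := by
  have h : (C zetaFive : MvPolynomial (Fin 2) ℂ) ^ 4 =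
      -1 - C zetaFive - C zetaFive ^ 2 - C zetaFive ^ 3 := by
    rw [← C_pow, zetaFive_pow_four]
    simp
  simpa [octPoly, F] using sum_octForm_sq h (X 0) (X 1)

/-- The substitution by `A` carries the sextic of index `σ k` to that of index `k`. -/
def Permutes (A : Matrix.SpecialLinearGroup (Fin 2) ℂ) (σ : Equiv.Perm (Fin 5)) : Prop :=
  ∀ k, subst A (octPoly (σ k)) = octPoly k

namespace Permutes

variable {A B : Matrix.SpecialLinearGroup (Fin 2) ℂ} {σ τ : Equiv.Perm (Fin 5)}

theorem one : Permutes 1 1 := fun k => by simp [subst_one]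

theorem mul (hA : Permutes A σ) (hB : Permutes B τ) : Permutes (A * B) (σ * τ) := fun k => by
  rw [Matrix.SpecialLinearGroup.coe_mul, subst_mul, Equiv.Perm.mul_apply, hA, hB]

theorem inv (hA : Permutes A σ) : Permutes A⁻¹ σ⁻¹ := fun k => by
  rw [← hA (σ⁻¹ k), ← Equiv.Perm.mul_apply, mul_inv_cancel, Equiv.Perm.one_apply, ← subst_mul,
    ← Matrix.SpecialLinearGroup.coe_mul, mul_inv_cancel, Matrix.SpecialLinearGroup.coe_one,
    subst_one]

theorem unique (hσ : Permutes A σ) (hτ : Permutes A τ) : σ = τ := by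
  have h := hσ.mul hτ.inv
  rw [mul_inv_cancel] at h
  refine mul_inv_eq_one.1 (Equiv.ext fun k => octPoly_injective ?_)
  simpa [subst_one] using h k

theorem subst_F (hA : Permutes A σ) : subst A F = F := by
  have h : subst A (-20 * F) = -20 * F := by
    rw [← sum_octPoly_sq]
    conv_lhs => rw [← Equiv.sum_comp σ]
    simp only [subst, map_sum, map_pow]
    exact Finset.sum_congr rfl fun k _ => by rw [← hA k, subst]
  simp only [subst, map_mul, map_neg, map_ofNat] at h ⊢
  exact mul_left_cancel₀ (by norm_num) h

theorem eq_one_or_neg_one (hA : Permutes A 1) :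
    (A : Matrix (Fin 2) (Fin 2) ℂ) = 1 ∨ (A : Matrix (Fin 2) (Fin 2) ℂ) = -1 := by
  have h : ∀ x y : ℂ, (A 0 0 * x + A 0 1 * y) ^ 4 * (A 1 0 * x + A 1 1 * y) ^ 2 =
      x ^ 4 * y ^ 2 := fun x y => by
    have h₁ : ∀ k : Fin 5, octForm (zetaFive ^ (k : ℕ)) (A 0 0 * x + A 0 1 * y)
        (A 1 0 * x + A 1 1 * y) = octForm (zetaFive ^ (k : ℕ)) x y := fun k => by
      simpa [eval_subst, eval_octPoly, Matrix.mulVec, dotProduct, Fin.sum_univ_two] using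
        congrArg (eval ![x, y]) (hA k)
    have h₂ := sum_pow_mul_octForm zetaFive_pow_four (A 0 0 * x + A 0 1 * y)
      (A 1 0 * x + A 1 1 * y)
    simp only [h₁] at h₂
    rw [sum_pow_mul_octForm zetaFive_pow_four] at h₂
    linear_combination (1 / 25) * h₂
  have hdet : A 0 0 * A 1 1 - A 0 1 * A 1 0 = 1 := by
    rw [← Matrix.det_fin_two]
    exact A.2
  obtain ⟨hb, hc, ⟨ha, hd⟩ | ⟨ha, hd⟩⟩ := eq_one_or_neg_one_of_map_monomial hdet h
  · left
    ext i j
    fin_cases i <;> fin_cases j <;> simpa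
  · right
    ext i j
    fin_cases i <;> fin_cases j <;> simpa

theorem neg (hA : Permutes A σ) : Permutes (-A) σ := fun k => by
  rw [← hA k]
  refine MvPolynomial.funext fun v => ?_
  simp [eval_subst, eval_octPoly, Matrix.neg_mulVec, octForm]
  ring

end Permutes

/-- The subgroup of `SL(2, ℂ)` acting on the five octahedral sextics by even permutations. -/
def binaryIcosahedral : Subgroup (Matrix.SpecialLinearGroup (Fin 2) ℂ) where
  carrier := {A | ∃ σ : alternatingGroup (Fin 5), Permutes A σ}
  one_mem' := ⟨1, Permutes.one⟩
  mul_mem' := fun ⟨σ, hσ⟩ ⟨τ, hτ⟩ => ⟨σ * τ, hσ.mul hτ⟩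
  inv_mem' := fun ⟨σ, hσ⟩ => ⟨σ⁻¹, hσ.inv⟩

namespace binaryIcosahedral

/-- The permutation of the octahedral sextics induced by an element of the group. -/
noncomputable def toAlternating : binaryIcosahedral →* alternatingGroup (Fin 5) :=
  MonoidHom.mk' (fun A => A.2.choose) fun A B =>
    Subtype.ext <| (A * B).2.choose_spec.unique (A.2.choose_spec.mul B.2.choose_spec)

theorem permutes_toAlternating (A : binaryIcosahedral) : Permutes A (toAlternating A) :=
  A.2.choose_spec

theorem mem_range_toAlternating {A : Matrix.SpecialLinearGroup (Fin 2) ℂ}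
    {σ : alternatingGroup (Fin 5)} (h : Permutes A σ) : σ ∈ toAlternating.range :=
  ⟨⟨A, σ, h⟩, Subtype.ext ((permutes_toAlternating _).unique h)⟩

/-- The even permutation of the sextics induced by the rotation of order five. -/
def rotationPerm : alternatingGroup (Fin 5) := ⟨(finRotate 5)⁻¹, Equiv.Perm.mem_alternatingGroup.2 (by decide)⟩

/-- The even permutation of the sextics induced by the involution. -/
def involutionPerm : alternatingGroup (Fin 5) := 
  ⟨Equiv.swap 1 2 * Equiv.swap 3 4, Equiv.Perm.mem_alternatingGroup.2 (by decide)⟩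

theorem rotationPerm_mem_range : rotationPerm ∈ toAlternating.range := by
  have hdet : (!![zetaFive ^ 3, 0; 0, zetaFive ^ 2]).det = 1 := by
    rw [Matrix.det_fin_two_of, ← pow_add, zetaFive_pow_five]
    simp
  refine mem_range_toAlternating (A := ⟨_, hdet⟩) fun k => MvPolynomial.funext fun v => ?_
  have h := octForm_rotation zetaFive_pow_five (zetaFive ^ (rotationPerm.1 k : ℕ)) (v 0) (v 1)
  have hk : zetaFive ^ (rotationPerm.1 k : ℕ) * zetaFive = zetaFive ^ (k : ℕ) := by
    rw [← pow_succ]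
    have : ((rotationPerm.1 k : ℕ) + 1) % 5 = k := by
      clear h
      revert k
      decide
    rw [← this, ← pow_eq_pow_mod _ zetaFive_pow_five]
  rw [hk] at h
  simpa [eval_subst, eval_octPoly, Matrix.mulVec, dotProduct, Fin.sum_univ_two] using h

theorem involutionPerm_mem_range : involutionPerm ∈ toAlternating.range := by
  have he := zetaFive_pow_four
  generalize hz : zetaFive = e at he
  obtain ⟨a, ha⟩ : ∃ a : ℂ, 5 * a = -e - 2 * e ^ 2 + 2 * e ^ 3 + e ^ 4 :=
    ⟨_, mul_div_cancel₀ _ (by norm_num)⟩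
  obtain ⟨b, hb⟩ : ∃ b : ℂ, 5 * b = -2 * e + e ^ 2 - e ^ 3 + 2 * e ^ 4 :=
    ⟨_, mul_div_cancel₀ _ (by norm_num)⟩
  have ha₂ : 5 * a ^ 2 = e ^ 2 + e ^ 3 - 2 := by grind
  have hb₂ : 5 * b ^ 2 = -3 - e ^ 2 - e ^ 3 := by grind
  have hab : 5 * (a * b) = 2 * e ^ 3 + 2 * e ^ 2 + 1 := by grind
  have hdet : (!![a, b; b, -a]).det = 1 := by
    rw [Matrix.det_fin_two_of]
    linear_combination (-1 / 5) * ha₂ - (1 / 5) * hb₂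
  refine mem_range_toAlternating (A := ⟨_, hdet⟩) fun k => MvPolynomial.funext fun v => ?_
  have h := mul_left_cancel₀ (by norm_num) (octForm_involution (v 0) (v 1) he ha₂ hb₂ hab k)
  have hk : (![0, 2, 1, 4, 3] : Fin 5 → Fin 5) k = involutionPerm.1 k := by
    clear h
    revert k
    decide
  rw [hk, ← hz] at h
  simpa [eval_subst, eval_octPoly, Matrix.mulVec, dotProduct, Fin.sum_univ_two, sub_eq_add_neg]
    using h

theorem eq_top_of_orderOf {H : Subgroup (alternatingGroup (Fin 5))}
    {ρ σ τ : alternatingGroup (Fin 5)} (hρ : ρ ∈ H) (hσ : σ ∈ H) (hτ : τ ∈ H)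
    (hρ₂ : orderOf ρ = 2) (hσ₃ : orderOf σ = 3) (hτ₅ : orderOf τ = 5) : H = ⊤ := by
  have h₂ : 2 ∣ Nat.card H := hρ₂.symm.dvd.trans <| H.orderOf_dvd_natCard hρ
  have h₃ : 3 ∣ Nat.card H := hσ₃.symm.dvd.trans <| H.orderOf_dvd_natCard hσ
  have h₅ : 5 ∣ Nat.card H := hτ₅.symm.dvd.trans <| H.orderOf_dvd_natCard hτ
  have hcard : Nat.card H * H.index = 60 := by
    rw [H.card_mul_index, nat_card_alternatingGroup]
    simp [Nat.factorial]
  have h₃₀ : 30 ∣ Nat.card H := by omega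
  have hindex : H.index = 1 ∨ H.index = 2 := by
    obtain ⟨m, hm⟩ := h₃₀
    rw [hm, mul_assoc] at hcard
    have : H.index ∣ 2 := ⟨m, by linarith⟩
    exact (Nat.dvd_prime Nat.prime_two).1 this
  rcases hindex with h | h
  · exact Subgroup.index_eq_one.1 h
  · have hn : H.Normal := Subgroup.normal_of_index_eq_two h
    refine (IsSimpleGroup.eq_bot_or_eq_top_of_normal H hn).resolve_left fun hbot => ?_
    rw [hbot, Subgroup.card_bot] at h₂
    omega

theorem toAlternating_surjective : Function.Surjective toAlternating := by
  rw [← MonoidHom.range_eq_top]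
  refine eq_top_of_orderOf involutionPerm_mem_range
    (mul_mem rotationPerm_mem_range involutionPerm_mem_range) rotationPerm_mem_range ?_ ?_ ?_
  · exact orderOf_eq_prime (by decide) (by decide)
  · exact orderOf_eq_prime (by decide) (by decide)
  · have : Fact (Nat.Prime 5) := ⟨by norm_num⟩
    exact orderOf_eq_prime (by decide) (by decide)

theorem mem_ker_toAlternating {z : binaryIcosahedral} : z ∈ toAlternating.ker ↔
    ((z : Matrix.SpecialLinearGroup (Fin 2) ℂ) : Matrix (Fin 2) (Fin 2) ℂ) = 1 ∨
      ((z : Matrix.SpecialLinearGroup (Fin 2) ℂ) : Matrix (Fin 2) (Fin 2) ℂ) = -1 := by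
  refine ⟨fun h => ?_, fun h => ?_⟩
  · have hz := permutes_toAlternating z
    rw [MonoidHom.mem_ker.1 h] at hz
    exact hz.eq_one_or_neg_one
  · refine Subtype.ext ((permutes_toAlternating z).unique ?_)
    rcases h with h | h
    · rw [show (z : Matrix.SpecialLinearGroup (Fin 2) ℂ) = 1 from Subtype.ext h]
      exact Permutes.one
    · rw [show (z : Matrix.SpecialLinearGroup (Fin 2) ℂ) = -1 from Subtype.ext (by simpa using h)]
      exact Permutes.one.neg

theorem center_eq_ker : Subgroup.center binaryIcosahedral = toAlternating.ker := by
  refine le_antisymm (fun z hz => ?_) fun z hz => Subgroup.mem_center_iff.2 fun g => ?_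
  · have h : toAlternating z ∈ Subgroup.center (alternatingGroup (Fin 5)) :=
      Subgroup.mem_center_iff.2 fun σ => by
        obtain ⟨g, rfl⟩ := toAlternating_surjective σ
        rw [← map_mul, ← map_mul, Subgroup.mem_center_iff.1 hz g]
    rwa [alternatingGroup.center_eq_bot (by simp), Subgroup.mem_bot] at h
  · refine Subtype.ext (Subtype.ext ?_)
    rcases mem_ker_toAlternating.1 hz with h | h <;> simp [h]

theorem card_ker : Nat.card toAlternating.ker = 2 := by
  have hneg : Permutes (-1) (1 : alternatingGroup (Fin 5)) := Permutes.one.neg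
  have h : (toAlternating.ker : Set binaryIcosahedral) = {1, ⟨-1, 1, hneg⟩} := by
    ext z
    rw [SetLike.mem_coe, mem_ker_toAlternating, Set.mem_insert_iff, Set.mem_singleton_iff]
    refine or_congr ⟨fun h => Subtype.ext (Subtype.ext h), fun h => by simp [h]⟩
      ⟨fun h => Subtype.ext (Subtype.ext (by simpa using h)), fun h => by simp [h]⟩
  rw [← SetLike.coe_sort_coe, Nat.card_coe_set_eq, h, Set.ncard_pair]
  intro h₁
  have h₂ := congrArg (fun z : binaryIcosahedral => z.1 0 0) h₁
  norm_num at h₂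

end binaryIcosahedral

/-- There is an order-120 subgroup `G` of `SL(2,ℂ)` leaving `F` invariant whose center
is `{I, −I}` of order 2, and whose quotient by its center is isomorphic to the
alternating group `A₅` (the icosahedral rotation group of order 60). -/
theorem binary_icosahedral_mod_center_is_A5 :
    ∃ G : Subgroup (Matrix.SpecialLinearGroup (Fin 2) ℂ),
      Nat.card G = 120 ∧
      (∀ A ∈ G, subst ((A : Matrix.SpecialLinearGroup (Fin 2) ℂ) : Matrix (Fin 2) (Fin 2) ℂ)
          F = F) ∧
      Nat.card (Subgroup.center G) = 2 ∧
      (∀ z : G, z ∈ Subgroup.center G ↔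
        (((z : Matrix.SpecialLinearGroup (Fin 2) ℂ) : Matrix (Fin 2) (Fin 2) ℂ) = 1 ∨
          ((z : Matrix.SpecialLinearGroup (Fin 2) ℂ) : Matrix (Fin 2) (Fin 2) ℂ) = -1)) ∧
      Nonempty ((G ⧸ Subgroup.center G) ≃* alternatingGroup (Fin 5)) := by
  refine ⟨binaryIcosahedral, ?_, fun A ⟨σ, hσ⟩ => hσ.subst_F, ?_, fun z => ?_, ?_⟩
  · rw [← binaryIcosahedral.toAlternating.ker.card_mul_index, binaryIcosahedral.card_ker,
      Subgroup.index_ker,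
      MonoidHom.range_eq_top.2 binaryIcosahedral.toAlternating_surjective, Subgroup.card_top,
      nat_card_alternatingGroup]
    simp [Nat.factorial]
  · rw [binaryIcosahedral.center_eq_ker, binaryIcosahedral.card_ker]
  · rw [binaryIcosahedral.center_eq_ker, binaryIcosahedral.mem_ker_toAlternating]
  · exact ⟨(QuotientGroup.quotientMulEquivOfEq binaryIcosahedral.center_eq_ker).trans
      (QuotientGroup.quotientKerEquivOfSurjective _
        binaryIcosahedral.toAlternating_surjective)⟩
end

section
/- Let G be any subgroup of SL(2,ℂ) of order 120 under which F(x,y) = x·y·(x^10 − 11x^5y^5 − y^10) is invariant (F(A·(x,y)) = F(x,y) for all A ∈ G). If P ∈ ℂ[x,y] is a homogeneous polynomial of degree 4, of degree 8, or of degree 16 that is invariant under every element of G, then P = 0. (There are no nonzero icosahedral invariants in degrees 4, 8, and 16.) -/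
open MvPolynomial

/-- The matrix of an element of \`SL(2,ℂ)\`. -/
noncomputable def mat (A : Matrix.SpecialLinearGroup (Fin 2) ℂ) : Matrix (Fin 2) (Fin 2) ℂ := A

open Matrix (SpecialLinearGroup)

lemma eval_subst_s16 (A : Matrix (Fin 2) (Fin 2) ℂ) (Q : MvPolynomial (Fin 2) ℂ) (x y : ℂ) :
    eval ![x, y] (subst A Q) =
      eval ![A 0 0 * x + A 0 1 * y, A 1 0 * x + A 1 1 * y] Q := by
  have h : (aeval ![x, y]).comp
      (aeval (fun i => C (A i 0) * X 0 + C (A i 1) * X 1) :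
        MvPolynomial (Fin 2) ℂ →ₐ[ℂ] MvPolynomial (Fin 2) ℂ) =
      aeval ![A 0 0 * x + A 0 1 * y, A 1 0 * x + A 1 1 * y] := by
    ext i
    fin_cases i <;> simp
  simpa [subst, MvPolynomial.aeval_eq_eval] using DFunLike.congr_fun h Q

lemma eval_eq_of_subst_eq {A : SpecialLinearGroup (Fin 2) ℂ} {Q : MvPolynomial (Fin 2) ℂ}
    (h : subst (mat A) Q = Q) (x y : ℂ) :
    eval ![A 0 0 * x + A 0 1 * y, A 1 0 * x + A 1 1 * y] Q = eval ![x, y] Q := by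
  exact (eval_subst_s16 (mat A) Q x y).symm.trans (by rw [h])

lemma eval_F (x y : ℂ) :
    eval ![x, y] F = x * y * (x ^ 10 - 11 * x ^ 5 * y ^ 5 - y ^ 10) := by
  simp [F]

lemma F_ne_zero : F ≠ 0 := by
  intro h
  have := eval_F 1 1
  rw [h] at this
  norm_num at this

lemma MvPolynomial.eq_zero_of_eval_fin_two {Q : MvPolynomial (Fin 2) ℂ}
    (h : ∀ x y, eval ![x, y] Q = 0) : Q = 0 := by
  refine MvPolynomial.funext fun v => ?_
  rw [map_zero, ← h (v 0) (v 1)]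
  congr 1
  congr 1
  ext i
  fin_cases i <;> rfl

/-- An upper triangular element of `SL(2,ℂ)` preserving `F` is diagonal of order dividing ten. -/
lemma diagonal_of_subst_F_eq {A : SpecialLinearGroup (Fin 2) ℂ} (hF : subst (mat A) F = F)
    (h10 : A 1 0 = 0) : A 0 1 = 0 ∧ A 0 0 ^ 10 = 1 := by
  have hdet := A.det_coe
  rw [Matrix.det_fin_two, h10, mul_zero, sub_zero] at hdet
  have hd : A 1 1 ≠ 0 := right_ne_zero_of_mul_eq_one hdet
  generalize hga : A 0 0 = a at *
  generalize hgb : A 0 1 = b at *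
  generalize hgd : A 1 1 = d at *
  have key : (Polynomial.C a + Polynomial.C b * Polynomial.X) * Polynomial.C d *
      ((Polynomial.C a + Polynomial.C b * Polynomial.X) ^ 10 -
        11 * (Polynomial.C a + Polynomial.C b * Polynomial.X) ^ 5 *
          (Polynomial.C d * Polynomial.X) ^ 5 - (Polynomial.C d * Polynomial.X) ^ 10) =
      1 - 11 * Polynomial.X ^ 5 - Polynomial.X ^ 10 := by
    refine mul_left_cancel₀ (Polynomial.X_ne_zero (R := ℂ)) (Polynomial.funext fun t => ?_)
    have := eval_eq_of_subst_eq hF 1 t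
    rw [eval_F, eval_F, h10, hga, hgb, hgd] at this
    simp only [Polynomial.eval_mul, Polynomial.eval_add, Polynomial.eval_sub,
      Polynomial.eval_pow, Polynomial.eval_C, Polynomial.eval_X, Polynomial.eval_one,
      Polynomial.eval_ofNat]
    linear_combination this
  have h0 := congrArg (Polynomial.eval 0) key
  have h1 := congrArg (fun p => Polynomial.eval 0 (Polynomial.derivative p)) key
  simp [Polynomial.derivative_pow] at h0 h1
  have ha10 : a ^ 10 = 1 := by linear_combination h0 - a ^ 10 * hdet
  refine ⟨?_, ha10⟩
  have : 11 * d * b = 0 := by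
    linear_combination h1 - 11 * d * b * ha10
  simpa [hd] using this

/-- Elements of `SL(2,ℂ)` that preserve `F` and fix `(1 : 0)` are determined by their top left
entry. -/
lemma eq_of_subst_F_eq {A B : SpecialLinearGroup (Fin 2) ℂ} (hA : subst (mat A) F = F)
    (hB : subst (mat B) F = F) (hA10 : A 1 0 = 0) (hB10 : B 1 0 = 0) (h : A 0 0 = B 0 0) :
    A = B := by
  have det := A.det_coe
  have det' := B.det_coe
  rw [Matrix.det_fin_two, hA10, mul_zero, sub_zero] at det
  rw [Matrix.det_fin_two, hB10, mul_zero, sub_zero, ← h] at det'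
  ext i j
  fin_cases i <;> fin_cases j
  · exact h
  · exact (diagonal_of_subst_F_eq hA hA10).1.trans (diagonal_of_subst_F_eq hB hB10).1.symm
  · exact hA10.trans hB10.symm
  · exact mul_left_cancel₀ (left_ne_zero_of_mul_eq_one det) (det.trans det'.symm)

/-- The point of the projective line to which `A` maps `(1 : 0)`; `none` is `(1 : 0)` itself. -/
noncomputable def imageInfty (A : SpecialLinearGroup (Fin 2) ℂ) : Option ℂ :=
  open Classical in if A 1 0 = 0 then none else some (A 0 0 / A 1 0)

/-- The dehomogenization `F(t,1)`. -/
noncomputable def dehomogenizedF : Polynomial ℂ :=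
  Polynomial.X ^ 11 - 11 * Polynomial.X ^ 6 - Polynomial.X

lemma natDegree_dehomogenizedF : dehomogenizedF.natDegree = 11 := by
  unfold dehomogenizedF
  compute_degree!

/-- The zeros of `F` on the projective line. -/
noncomputable def zerosF : Finset (Option ℂ) :=
  open Classical in insert none (dehomogenizedF.roots.toFinset.map .some)

lemma card_zerosF_le : zerosF.card ≤ 12 := by
  classical
  refine (Finset.card_insert_le _ _).trans ?_
  rw [Finset.card_map]
  have := dehomogenizedF.card_roots'
  rw [natDegree_dehomogenizedF] at this
  exact Nat.succ_le_succ ((Multiset.toFinset_card_le _).trans this)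

lemma some_mem_zerosF {c : ℂ} : some c ∈ zerosF ↔ c ^ 11 - 11 * c ^ 6 - c = 0 := by
  have h : dehomogenizedF ≠ 0 := by
    intro h
    simpa [h] using natDegree_dehomogenizedF
  simp [zerosF, h]
  simp [dehomogenizedF]

lemma none_mem_zerosF : none ∈ zerosF := by simp [zerosF]

lemma eval_F_first_column {A : SpecialLinearGroup (Fin 2) ℂ} (hF : subst (mat A) F = F) :
    A 0 0 * A 1 0 * (A 0 0 ^ 10 - 11 * A 0 0 ^ 5 * A 1 0 ^ 5 - A 1 0 ^ 10) = 0 := by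
  have := eval_eq_of_subst_eq hF 1 0
  simpa [eval_F] using this

lemma imageInfty_mem_zerosF {A : SpecialLinearGroup (Fin 2) ℂ} (hF : subst (mat A) F = F) :
    imageInfty A ∈ zerosF := by
  unfold imageInfty
  split_ifs with h
  · exact none_mem_zerosF
  · rw [some_mem_zerosF]
    have := eval_F_first_column hF
    field_simp
    exact mul_left_cancel₀ h (by linear_combination this)

section Orbit

variable {G : Subgroup (SpecialLinearGroup (Fin 2) ℂ)}

lemma card_fiber_imageInfty_le [Fintype G] [DecidableEq (Option ℂ)]
    (hF : ∀ A ∈ G, subst (mat A) F = F) (z : Option ℂ) :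
    (Finset.univ.filter fun A : G => imageInfty A = z).card ≤ 10 := by
  rcases (Finset.univ.filter fun A : G => imageInfty A = z).eq_empty_or_nonempty with h | ⟨B, hB⟩
  · simp [h]
  have hBz : imageInfty B = z := by simpa using hB
  have lower : ∀ A : G, imageInfty A = z →
      ((B⁻¹ * A : G) : SpecialLinearGroup (Fin 2) ℂ) 1 0 = 0 := by
    intro A hA
    rw [← hBz] at hA
    have : (A : SpecialLinearGroup (Fin 2) ℂ) 0 0 * (B : SpecialLinearGroup (Fin 2) ℂ) 1 0 =
        (B : SpecialLinearGroup (Fin 2) ℂ) 0 0 * (A : SpecialLinearGroup (Fin 2) ℂ) 1 0 := by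
      unfold imageInfty at hA
      split_ifs at hA with h1 h2 h2
      · simp [h1, h2]
      · field_simp at hA
        simpa [div_eq_div_iff h1 h2] using hA
    simp [Matrix.SpecialLinearGroup.coe_inv, Matrix.adjugate_fin_two, Matrix.mul_apply]
    linear_combination -this
  have hcard : (Polynomial.nthRootsFinset 10 (1 : ℂ)).card ≤ 10 := by
    classical
    rw [Polynomial.nthRootsFinset_def]
    exact (Multiset.toFinset_card_le _).trans (Polynomial.card_nthRoots 10 1)
  refine le_trans (Finset.card_le_card_of_injOn
    (fun A : G => ((B⁻¹ * A : G) : SpecialLinearGroup (Fin 2) ℂ) 0 0) ?_ ?_) hcard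
  · intro A hA
    have hA' : imageInfty A = z := by simpa using hA
    have := (diagonal_of_subst_F_eq (hF _ (B⁻¹ * A).2) (lower A hA')).2
    simpa [Polynomial.mem_nthRootsFinset (show 0 < 10 by norm_num)] using this
  · intro A hA A' hA' h
    have hA : imageInfty A = z := by simpa using hA
    have hA' : imageInfty A' = z := by simpa using hA'
    exact mul_left_cancel (a := B⁻¹) (Subtype.ext (eq_of_subst_F_eq (hF _ (B⁻¹ * A).2)
      (hF _ (B⁻¹ * A').2) (lower A hA) (lower A' hA') h))

lemma card_fiber_imageInfty [Fintype G] [DecidableEq (Option ℂ)]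
    (hcard : Fintype.card G = 120) (hF : ∀ A ∈ G, subst (mat A) F = F)
    {z : Option ℂ} (hz : z ∈ zerosF) :
    (Finset.univ.filter fun A : G => imageInfty A = z).card = 10 := by
  refine le_antisymm (card_fiber_imageInfty_le hF z) ?_
  have h := Finset.card_le_mul_card_image_of_maps_to
    (s := Finset.univ.filter fun A : G => imageInfty A ≠ z) (t := zerosF.erase z)
    (f := fun A : G => imageInfty A)
    (fun A hA => Finset.mem_erase.2 ⟨by simpa using hA, imageInfty_mem_zerosF (hF A A.2)⟩) 10
    (fun w _ => (Finset.card_le_card fun A hA => by simp at hA ⊢; exact hA.2).trans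
      (card_fiber_imageInfty_le hF w))
  have hsum := Finset.card_filter_add_card_filter_not (s := (Finset.univ : Finset G))
    (fun A : G => imageInfty A = z)
  rw [Finset.card_univ, hcard] at hsum
  rw [Finset.card_erase_of_mem hz] at h
  have := card_zerosF_le
  have h' : (Finset.univ.filter fun A : G => ¬ imageInfty A = z).card ≤ 10 * (zerosF.card - 1) := h
  omega

lemma exists_imageInfty_eq (hcard : Nat.card G = 120) (hF : ∀ A ∈ G, subst (mat A) F = F)
    {z : Option ℂ} (hz : z ∈ zerosF) : ∃ A ∈ G, imageInfty A = z := by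
  classical
  have : Finite G := Nat.finite_of_card_ne_zero (by omega)
  have := Fintype.ofFinite G
  rw [Nat.card_eq_fintype_card] at hcard
  have h := card_fiber_imageInfty hcard hF hz
  obtain ⟨A, hA⟩ := Finset.card_pos.1 (by rw [h]; norm_num)
  exact ⟨A, A.2, by simpa using hA⟩

lemma exists_antidiagonal (hcard : Nat.card G = 120) (hF : ∀ A ∈ G, subst (mat A) F = F) :
    ∃ A ∈ G, A 0 0 = 0 ∧ A 1 1 = 0 ∧ A 1 0 ^ 10 = 1 := by
  obtain ⟨A, hA, h⟩ := exists_imageInfty_eq hcard hF (z := some 0) (by simp [some_mem_zerosF])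
  unfold imageInfty at h
  split_ifs at h with h0
  have h00 : A 0 0 = 0 := by simpa [h0] using h
  have hdet := A.det_coe
  rw [Matrix.det_fin_two] at hdet
  let B : SpecialLinearGroup (Fin 2) ℂ := ⟨!![A 1 0, A 1 1; -A 0 0, -A 0 1], by
    rw [Matrix.det_fin_two_of]
    linear_combination hdet⟩
  have hB : subst (mat B) F = F := by
    rw [← sub_eq_zero]
    refine MvPolynomial.eq_zero_of_eval_fin_two fun x y => ?_
    have := eval_eq_of_subst_eq (hF A hA) x y
    rw [map_sub, eval_subst_s16, ← this, eval_F, eval_F]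
    simp [mat, B]
    ring
  exact ⟨A, hA, h00, diagonal_of_subst_F_eq hB (by simp [B, h00])⟩

lemma exists_first_column_ne_zero (hcard : Nat.card G = 120)
    (hF : ∀ A ∈ G, subst (mat A) F = F) : ∃ A ∈ G, A 0 0 ≠ 0 ∧ A 1 0 ≠ 0 := by
  have hdeg : (Polynomial.X ^ 10 - 11 * Polynomial.X ^ 5 - 1 : Polynomial ℂ).degree ≠ 0 := by
    have : (Polynomial.X ^ 10 - 11 * Polynomial.X ^ 5 - 1 : Polynomial ℂ).degree = 10 := by
      compute_degree!
    rw [this]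
    norm_num
  obtain ⟨c, hc⟩ := IsAlgClosed.exists_root _ hdeg
  simp [Polynomial.IsRoot] at hc
  have hc0 : c ≠ 0 := by
    rintro rfl
    norm_num at hc
  obtain ⟨A, hA, h⟩ := exists_imageInfty_eq hcard hF (z := some c) (by
    rw [some_mem_zerosF]
    linear_combination c * hc)
  refine ⟨A, hA, ?_⟩
  unfold imageInfty at h
  split_ifs at h with h0
  refine ⟨fun h1 => hc0 ?_, h0⟩
  simpa [h1, eq_comm] using h

lemma exists_diagonal (hcard : Nat.card G = 120) (hF : ∀ A ∈ G, subst (mat A) F = F) :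
    ∃ A ∈ G, A 0 1 = 0 ∧ A 1 0 = 0 ∧ IsPrimitiveRoot (A 0 0) 10 := by
  classical
  have : Finite G := Nat.finite_of_card_ne_zero (by omega)
  have := Fintype.ofFinite G
  rw [Nat.card_eq_fintype_card] at hcard
  have lower : ∀ A : G, imageInfty A = none → (A : SpecialLinearGroup (Fin 2) ℂ) 1 0 = 0 := by
    intro A h
    unfold imageInfty at h
    split_ifs at h with h0
    exact h0
  have hζ := Complex.isPrimitiveRoot_exp 10 (by norm_num)
  have hsurj := Finset.surjOn_of_injOn_of_card_le
    (s := Finset.univ.filter fun A : G => imageInfty A = none)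
    (t := Polynomial.nthRootsFinset 10 (1 : ℂ))
    (fun A : G => (A : SpecialLinearGroup (Fin 2) ℂ) 0 0) ?_ ?_ ?_
  · obtain ⟨A, hA, h⟩ := hsurj (by
      simpa [Polynomial.mem_nthRootsFinset (show 0 < 10 by norm_num)] using hζ.pow_eq_one)
    have hA : imageInfty A = none := by simpa using hA
    refine ⟨A, A.2, (diagonal_of_subst_F_eq (hF A A.2) (lower A hA)).1, lower A hA, ?_⟩
    rw [show (A : SpecialLinearGroup (Fin 2) ℂ) 0 0 = _ from h]
    exact hζ
  · intro A hA
    have hA : imageInfty A = none := by simpa using hA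
    have := (diagonal_of_subst_F_eq (hF A A.2) (lower A hA)).2
    simpa [Polynomial.mem_nthRootsFinset (show 0 < 10 by norm_num)] using this
  · intro A hA A' hA' h
    have hA : imageInfty A = none := by simpa using hA
    have hA' : imageInfty A' = none := by simpa using hA'
    exact Subtype.ext (eq_of_subst_F_eq (hF A A.2) (hF A' A'.2) (lower A hA) (lower A' hA') h)
  · rw [card_fiber_imageInfty hcard hF none_mem_zerosF, hζ.card_nthRootsFinset]

end Orbit

lemma exists_eval_eq_sum {P : MvPolynomial (Fin 2) ℂ} {n : ℕ} (hP : P.IsHomogeneous n) :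
    ∃ c : ℕ → ℂ, ∀ x y, eval ![x, y] P =
      ∑ i ∈ Finset.range (n + 1), c i * (x ^ i * y ^ (n - i)) := by
  have hsum : ∀ m ∈ P.support, m 0 + m 1 = n := by
    intro m hm
    have := hP (mem_support_iff.1 hm)
    rwa [Finsupp.weight_apply, Finsupp.sum_fintype _ _ (by simp), Fin.sum_univ_two,
      Pi.one_apply, Pi.one_apply, smul_eq_mul, smul_eq_mul, mul_one, mul_one] at this
  have hm_eq : ∀ m ∈ P.support, m = Finsupp.single 0 (m 0) + Finsupp.single 1 (n - m 0) := by
    intro m hm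
    have := hsum m hm
    ext i
    fin_cases i
    · simp
    · simp
      omega
  refine ⟨fun i => P.coeff (Finsupp.single 0 i + Finsupp.single 1 (n - i)), fun x y => ?_⟩
  rw [eval_eq']
  refine Finset.sum_of_injOn (fun m => m 0) ?_ ?_ ?_ ?_
  · intro m hm m' hm' h
    have h : m 0 = m' 0 := h
    rw [hm_eq m hm, hm_eq m' hm', h]
  · intro m hm
    have := hsum m hm
    simp
    omega
  · intro i hi hi'
    by_cases h : P.coeff (Finsupp.single 0 i + Finsupp.single 1 (n - i)) = 0
    · simp only [h, zero_mul]
    · exact absurd ⟨_, mem_support_iff.2 h, by simp⟩ hi'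
  · intro m hm
    have := hsum m hm
    dsimp only
    rw [← hm_eq m hm, Fin.prod_univ_two, ← this, Nat.add_sub_cancel_left]
    rfl

lemma IsPrimitiveRoot.modEq_of_pow_eq_pow {ζ : ℂ} {k i j : ℕ} (hζ : IsPrimitiveRoot ζ k)
    (h0 : ζ ≠ 0) (h : ζ ^ i = ζ ^ j) : i ≡ j [MOD k] := by
  wlog hij : i ≤ j generalizing i j
  · exact (this h.symm (le_of_not_ge hij)).symm
  refine (Nat.modEq_iff_dvd' hij).2 (hζ.dvd_of_pow_eq_one _ ?_)
  exact mul_left_cancel₀ (pow_ne_zero i h0)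
    (by rw [← pow_add, Nat.add_sub_cancel' hij, h, mul_one])

lemma exists_eval_eq_sum_filter {P : MvPolynomial (Fin 2) ℂ} {n k : ℕ} (hP : P.IsHomogeneous n)
    {A : SpecialLinearGroup (Fin 2) ℂ} (hA : subst (mat A) P = P) (h01 : A 0 1 = 0)
    (h10 : A 1 0 = 0) (hζ : IsPrimitiveRoot (A 0 0) k) :
    ∃ c : ℕ → ℂ, ∀ x y, eval ![x, y] P =
      ∑ i ∈ (Finset.range (n + 1)).filter (fun i => i ≡ n - i [MOD k]),
        c i * (x ^ i * y ^ (n - i)) := by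
  obtain ⟨c, hc⟩ := exists_eval_eq_sum hP
  refine ⟨c, fun x y => ?_⟩
  rw [hc, Finset.sum_filter_of_ne]
  intro i hi hne
  have hdet := A.det_coe
  rw [Matrix.det_fin_two, h10, mul_zero, sub_zero] at hdet
  have key : ∑ i ∈ Finset.range (n + 1), Polynomial.C (c i * (A 0 0 ^ i * A 1 1 ^ (n - i))) *
      Polynomial.X ^ i = ∑ i ∈ Finset.range (n + 1), Polynomial.C (c i) * Polynomial.X ^ i := by
    refine Polynomial.funext fun t => ?_
    have := eval_eq_of_subst_eq hA t 1
    rw [hc, hc, h01, h10] at this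
    simp only [Polynomial.eval_finsetSum, Polynomial.eval_mul, Polynomial.eval_C,
      Polynomial.eval_pow, Polynomial.eval_X]
    simp only [zero_mul, add_zero, zero_add, mul_one, one_pow, mul_pow] at this
    rw [← this]
    exact Finset.sum_congr rfl fun j _ => by ring
  have hcoeff := congrArg (fun p => Polynomial.coeff p i) key
  simp only [Polynomial.finsetSum_coeff, Polynomial.coeff_C_mul_X_pow, Finset.sum_ite_eq,
    hi, if_true] at hcoeff
  have h1 : A 0 0 ^ i * A 1 1 ^ (n - i) = 1 :=
    mul_left_cancel₀ (left_ne_zero_of_mul hne) (hcoeff.trans (mul_one _).symm)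
  refine hζ.modEq_of_pow_eq_pow (left_ne_zero_of_mul_eq_one hdet) ?_
  calc A 0 0 ^ i = A 0 0 ^ i * (A 0 0 * A 1 1) ^ (n - i) := by rw [hdet, one_pow, mul_one]
    _ = A 0 0 ^ i * A 1 1 ^ (n - i) * A 0 0 ^ (n - i) := by rw [mul_pow]; ring
    _ = A 0 0 ^ (n - i) := by rw [h1, one_mul]

lemma eq_zero_of_eval_eq_mul_pow {P : MvPolynomial (Fin 2) ℂ} {c : ℂ} {k : ℕ} (hk : k ≠ 0)
    (hP : ∀ x y, eval ![x, y] P = c * (x * y) ^ k) {A : SpecialLinearGroup (Fin 2) ℂ}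
    (hA : subst (mat A) P = P) (h00 : A 0 0 ≠ 0) (h10 : A 1 0 ≠ 0) : P = 0 := by
  have h := eval_eq_of_subst_eq hA 1 0
  rw [hP, hP] at h
  have hc : c = 0 := by simpa [hk, h00, h10] using h
  exact MvPolynomial.eq_zero_of_eval_fin_two fun x y => by rw [hP, hc, zero_mul]

lemma subst_mul_s16 (A : Matrix (Fin 2) (Fin 2) ℂ) (P Q : MvPolynomial (Fin 2) ℂ) :
    subst A (P * Q) = subst A P * subst A Q :=
  map_mul _ P Q

/-- For any order-120 subgroup `G` of `SL(2,ℂ)` leaving `F` invariant (the binary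
icosahedral group), there are no nonzero `G`-invariant homogeneous polynomials of
degree 4, 8, or 16. -/
theorem no_invariants_in_degrees_4_8_16
    (G : Subgroup (Matrix.SpecialLinearGroup (Fin 2) ℂ)) (hcard : Nat.card G = 120)
    (hF : ∀ A ∈ G, subst (mat A) F = F)
    (P : MvPolynomial (Fin 2) ℂ)
    (hdeg : P.IsHomogeneous 4 ∨ P.IsHomogeneous 8 ∨ P.IsHomogeneous 16)
    (hP : ∀ A ∈ G, subst (mat A) P = P) :
    P = 0 := by
  obtain ⟨D, hD, hD01, hD10, hζ⟩ := exists_diagonal hcard hF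
  obtain ⟨A, hA, hA00, hA10⟩ := exists_first_column_ne_zero hcard hF
  rcases hdeg with hdeg | hdeg | hdeg
  · obtain ⟨c, hc⟩ := exists_eval_eq_sum_filter hdeg (hP D hD) hD01 hD10 hζ
    rw [show (Finset.range (4 + 1)).filter (fun i => i ≡ 4 - i [MOD 10]) = {2} by decide] at hc
    refine eq_zero_of_eval_eq_mul_pow two_ne_zero (c := c 2) (fun x y => ?_) (hP A hA) hA00 hA10
    rw [hc, Finset.sum_singleton, mul_pow]
  · obtain ⟨c, hc⟩ := exists_eval_eq_sum_filter hdeg (hP D hD) hD01 hD10 hζ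
    rw [show (Finset.range (8 + 1)).filter (fun i => i ≡ 8 - i [MOD 10]) = {4} by decide] at hc
    refine eq_zero_of_eval_eq_mul_pow four_ne_zero (c := c 4) (fun x y => ?_) (hP A hA) hA00 hA10
    rw [hc, Finset.sum_singleton, mul_pow]
  · obtain ⟨c, hc⟩ := exists_eval_eq_sum_filter hdeg (hP D hD) hD01 hD10 hζ
    rw [show (Finset.range (16 + 1)).filter (fun i => i ≡ 16 - i [MOD 10]) = {3, 8, 13} by
      decide] at hc
    replace hc : ∀ x y, eval ![x, y] P =
        c 3 * (x ^ 3 * y ^ 13) + c 8 * (x ^ 8 * y ^ 8) + c 13 * (x ^ 13 * y ^ 3) := by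
      intro x y
      rw [hc]
      simp [add_assoc]
    obtain ⟨J, hJ, hJ00, hJ11, hJ10⟩ := exists_antidiagonal hcard hF
    have hanti : c 3 = -c 13 := by
      have hdet := J.det_coe
      rw [Matrix.det_fin_two, hJ00, zero_mul, zero_sub] at hdet
      have h11 := eval_eq_of_subst_eq (hP J hJ) 1 1
      simp only [hJ00, hJ11, hc, zero_mul, zero_add, add_zero] at h11
      generalize J 0 1 = b at *
      generalize J 1 0 = d at *
      have hbd : b * d = -1 := by linear_combination -hdet
      have hb10 : b ^ 10 = 1 := by
        calc b ^ 10 = (b * d) ^ 10 := by rw [mul_pow, hJ10, mul_one]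
          _ = 1 := by rw [hbd]; norm_num
      have h3 : b ^ 3 * d ^ 13 = -1 := by
        calc b ^ 3 * d ^ 13 = (b * d) ^ 3 * d ^ 10 := by ring
          _ = -1 := by rw [hbd, hJ10]; norm_num
      have h8 : b ^ 8 * d ^ 8 = 1 := by
        rw [← mul_pow, hbd]
        norm_num
      have h13 : b ^ 13 * d ^ 3 = -1 := by
        calc b ^ 13 * d ^ 3 = (b * d) ^ 3 * b ^ 10 := by ring
          _ = -1 := by rw [hbd, hb10]; norm_num
      simp only [mul_one, one_pow] at h11
      rw [h3, h8, h13] at h11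
      linear_combination -h11 / 2
    have hmid : c 8 = -11 * c 13 := by
      have hroot := eval_F_first_column (hF A hA)
      have hzero := eval_eq_of_subst_eq (hP A hA) 1 0
      rw [hc, hc, hanti] at hzero
      simp only [mul_one, mul_zero, add_zero] at hzero
      have : (A 0 0 * A 1 0) ^ 8 * (c 8 + 11 * c 13) = 0 := by
        linear_combination hzero - c 13 * (A 0 0 * A 1 0) ^ 2 * hroot
      have hne : (A 0 0 * A 1 0) ^ 8 ≠ 0 := pow_ne_zero _ (mul_ne_zero hA00 hA10)
      linear_combination (mul_eq_zero.1 this).resolve_left hne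
    have hfactor : P = C (c 13) * (X 0 * X 1) ^ 2 * F := by
      rw [← sub_eq_zero]
      refine MvPolynomial.eq_zero_of_eval_fin_two fun x y => ?_
      rw [map_sub, map_mul, eval_F, hc, hanti, hmid]
      simp
      ring
    have hinv := hP A hA
    rw [hfactor, subst_mul_s16, hF A hA] at hinv
    rw [hfactor, eq_zero_of_eval_eq_mul_pow two_ne_zero (c := c 13) (fun x y => by simp)
      (mul_right_cancel₀ F_ne_zero hinv) hA00 hA10, zero_mul]
end
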